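/- Under the observer setup, fix an n×n real symmetric positive definite matrix X, an n×n_y real matrix Y, and a real γ > 0, and set P = X⁻¹ and L = X⁻¹·Y. Then the following two conditions are equivalent: (i) (A + L·C_y)·P + P·(A + L·C_y)ᵀ + (B_w̄ + L·D_w̄)·(B_w̄ + L·D_w̄)ᵀ is negative definite and trace(C_z·P·C_zᵀ) < γ²; (ii) the block matrix [[M₁₁, M₁₂, Y], [M₁₂ᵀ, -I_{n_d}, 0], [Yᵀ, 0, -diag(β)]] is negative definite, and there exists an n_z×n_z symmetric positive definite matrix Q with [[-Q, C_z], [C_zᵀ, -X]] negative definite and trace(Q) < γ². -/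

import Mathlib

open Matrix

/-- A real symmetric matrix `M` is negative definite if `xᵀ M x < 0` for all `x ≠ 0`. -/
def NegDef {n : Type*} [Fintype n] (M : Matrix n n ℝ) : Prop :=
  M.IsSymm ∧ ∀ x : n → ℝ, x ≠ 0 → x ⬝ᵥ M.mulVec x < 0

/-!
Congruence by `X` carries the Lyapunov inequality for `P = X⁻¹` to
`X F + (X F)ᵀ + (X W) (X W)ᵀ < 0`, where `F = A + L C_y` and `W = B_w̄ + L D_w̄`; since `X L = Y`,
the products `X F = X A + Y C_y` and `X W = [M₁₂, Y S_n]` are linear in `(X, Y)`. The quadratic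
term is the Schur complement term of the block `-diag(I, (S_n S_nᵀ)⁻¹)`, which gives the first LMI.
For the trace, a Schur complement turns the second LMI into `Q > C_z P C_zᵀ`, and such `Q` come
arbitrarily close to `C_z P C_zᵀ`.
-/

section

variable {m n k d y z : Type*} [Fintype m] [Fintype n] [Fintype k] [Fintype d] [Fintype y]
  [Fintype z]

open scoped ComplexOrder in
theorem posDef_iff_posSemidef_and_isUnit {𝕜 : Type*} [RCLike 𝕜] [DecidableEq n]
    {M : Matrix n n 𝕜} : M.PosDef ↔ M.PosSemidef ∧ IsUnit M :=
  ⟨fun hM => ⟨hM.posSemidef, hM.isUnit⟩, fun hM => hM.1.posDef_iff_isUnit.2 hM.2⟩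

open scoped ComplexOrder in
theorem posDef_fromBlocks₂₂_iff {l 𝕜 : Type*} [RCLike 𝕜] [Finite l] [DecidableEq k]
    (A : Matrix l l 𝕜) (B : Matrix l k 𝕜) {D : Matrix k k 𝕜} (hD : D.PosDef) :
    (fromBlocks A B Bᴴ D).PosDef ↔ (A - B * D⁻¹ * Bᴴ).PosDef := by
  classical
  have := Fintype.ofFinite l
  let := hD.isUnit.invertible
  rw [posDef_iff_posSemidef_and_isUnit, posDef_iff_posSemidef_and_isUnit,
    PosDef.fromBlocks₂₂ A B hD, isUnit_fromBlocks_iff_of_invertible₂₂, invOf_eq_nonsing_inv]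

theorem exists_posDef_sub_posDef_trace_lt_iff {S : Matrix z z ℝ} (hS : S.PosSemidef) {c : ℝ} :
    (∃ Q : Matrix z z ℝ, Q.PosDef ∧ (Q - S).PosDef ∧ Q.trace < c) ↔ S.trace < c := by
  classical
  constructor
  · rintro ⟨Q, -, hQS, hQ⟩
    have trace_sub_nonneg := hQS.posSemidef.trace_nonneg
    rw [trace_sub] at trace_sub_nonneg
    linarith
  · intro hlt
    -- The `+ 1` makes the trace bound strict and avoids dividing by zero when `z` is empty.
    obtain ⟨ε, hε, hε_card⟩ : ∃ ε : ℝ, 0 < ε ∧ ε * (Fintype.card z + 1) = c - S.trace :=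
      ⟨(c - S.trace) / (Fintype.card z + 1), div_pos (sub_pos.2 hlt) (by positivity),
        div_mul_cancel₀ _ (by positivity)⟩
    have hε_one : (ε • (1 : Matrix z z ℝ)).PosDef := PosDef.one.smul hε
    refine ⟨S + ε • 1, .posSemidef_add hS hε_one, by rwa [add_sub_cancel_left], ?_⟩
    rw [trace_add, trace_smul, trace_one, smul_eq_mul]
    linarith

theorem negDef_iff_posDef_neg {M : Matrix n n ℝ} : NegDef M ↔ (-M).PosDef := by
  simp [NegDef, posDef_iff_dotProduct_mulVec, IsSymm, neg_mulVec]

theorem negDef_mul_mul_transpose_iff [DecidableEq n] {U : Matrix n n ℝ} (hU : IsUnit U)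
    (M : Matrix n n ℝ) : NegDef (U * M * Uᵀ) ↔ NegDef M := by
  rw [negDef_iff_posDef_neg, negDef_iff_posDef_neg, ← hU.posDef_star_right_conjugate_iff (x := -M),
    star_eq_conjTranspose, conjTranspose_eq_transpose_of_trivial, Matrix.mul_neg, Matrix.neg_mul]

theorem negDef_fromBlocks_neg₂₂_iff [DecidableEq k] (A : Matrix m m ℝ) (B : Matrix m k ℝ)
    {D : Matrix k k ℝ} (hD : D.PosDef) :
    NegDef (fromBlocks A B Bᵀ (-D)) ↔ NegDef (A + B * D⁻¹ * Bᵀ) := by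
  have schur := posDef_fromBlocks₂₂_iff (-A) (-B) hD
  rw [conjTranspose_eq_transpose_of_trivial, transpose_neg] at schur
  rw [negDef_iff_posDef_neg, negDef_iff_posDef_neg, fromBlocks_neg, neg_neg, schur, neg_add',
    Matrix.neg_mul, Matrix.neg_mul, Matrix.mul_neg, neg_neg]

theorem negDef_fromBlocks_neg_inv_mul_transpose_iff [DecidableEq k] (E : Matrix m m ℝ)
    (F : Matrix m k ℝ) {T : Matrix k k ℝ} (hT : IsUnit T) :
    NegDef (fromBlocks E F Fᵀ (-(T * Tᵀ)⁻¹)) ↔ NegDef (E + F * T * (F * T)ᵀ) := by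
  have hTT : (T * Tᵀ).PosDef := by
    simpa using PosDef.mul_conjTranspose_self T (vecMul_injective_of_isUnit hT)
  rw [negDef_fromBlocks_neg₂₂_iff E F hTT.inv,
    nonsing_inv_nonsing_inv _ ((isUnit_iff_isUnit_det _).1 hTT.isUnit), transpose_mul]
  simp only [Matrix.mul_assoc]

theorem negDef_fromBlocks_fromCols_iff [DecidableEq d] [DecidableEq y] (E : Matrix m m ℝ)
    (M : Matrix m d ℝ) (Y : Matrix m y ℝ) {N : Matrix y y ℝ} (hN : IsUnit N) :
    NegDef (fromBlocks E (fromCols M Y) (fromRows Mᵀ Yᵀ)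
        (fromBlocks (-(1 : Matrix d d ℝ)) 0 0 (-(N * Nᵀ)⁻¹))) ↔
      NegDef (E + fromCols M (Y * N) * (fromCols M (Y * N))ᵀ) := by
  let T : Matrix (d ⊕ y) (d ⊕ y) ℝ := fromBlocks 1 0 0 N
  have hT : IsUnit T := isUnit_fromBlocks_zero₂₁.2 ⟨isUnit_one, hN⟩
  have hNN : IsUnit (N * Nᵀ) := hN.mul ((isUnit_transpose N).2 hN)
  have weight_eq : fromBlocks (-(1 : Matrix d d ℝ)) 0 0 (-(N * Nᵀ)⁻¹) = -(T * Tᵀ)⁻¹ := by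
    have hTT : T * Tᵀ = fromBlocks 1 0 0 (N * Nᵀ) := by
      simp [T, fromBlocks_transpose, fromBlocks_multiply]
    rw [hTT, inv_fromBlocks_zero₂₁_of_isUnit_iff _ _ _ (iff_of_true isUnit_one hNN)]
    simp [fromBlocks_neg]
  have cols_mul : fromCols M Y * T = fromCols M (Y * N) := by
    simp [T, fromCols_mul_fromBlocks]
  rw [weight_eq, ← transpose_fromCols, negDef_fromBlocks_neg_inv_mul_transpose_iff _ _ hT, cols_mul]

theorem negDef_lyapunov_inv_iff [DecidableEq n] {X : Matrix n n ℝ} (hX : IsUnit X)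
    (hX_symm : X.IsSymm) (F : Matrix n n ℝ) (W : Matrix n k ℝ) :
    NegDef (F * X⁻¹ + X⁻¹ * Fᵀ + W * Wᵀ) ↔
      NegDef (X * F + (X * F)ᵀ + X * W * (X * W)ᵀ) := by
  have hX_det : IsUnit X.det := (isUnit_iff_isUnit_det X).1 hX
  have congruence : X * (F * X⁻¹ + X⁻¹ * Fᵀ + W * Wᵀ) * Xᵀ =
      X * F + (X * F)ᵀ + X * W * (X * W)ᵀ := by
    simp only [transpose_mul, hX_symm.eq, Matrix.mul_add, Matrix.add_mul, Matrix.mul_assoc,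
      nonsing_inv_mul _ hX_det, mul_nonsing_inv_cancel_left _ _ hX_det, Matrix.mul_one]
  rw [← congruence, negDef_mul_mul_transpose_iff hX]

theorem exists_posDef_negDef_fromBlocks_trace_lt_iff [DecidableEq n] {X : Matrix n n ℝ}
    (hX : X.PosDef) (C : Matrix z n ℝ) {c : ℝ} :
    (∃ Q : Matrix z z ℝ, Q.PosDef ∧ NegDef (fromBlocks (-Q) C Cᵀ (-X)) ∧ Q.trace < c) ↔
      (C * X⁻¹ * Cᵀ).trace < c := by
  have hS : (C * X⁻¹ * Cᵀ).PosSemidef := by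
    simpa using hX.inv.posSemidef.mul_mul_conjTranspose_same C
  have schur (Q : Matrix z z ℝ) :
      NegDef (fromBlocks (-Q) C Cᵀ (-X)) ↔ (Q - C * X⁻¹ * Cᵀ).PosDef := by
    rw [negDef_fromBlocks_neg₂₂_iff _ _ hX, negDef_iff_posDef_neg, neg_add', neg_neg]
  simp only [schur, exists_posDef_sub_posDef_trace_lt_iff hS]

theorem inv_diagonal_mul_transpose {K : Type*} [Field K] [DecidableEq y] {s : y → K}
    (hs : ∀ i, s i ≠ 0) :
    (diagonal s * (diagonal s)ᵀ)⁻¹ = diagonal fun i => (s i)⁻¹ ^ 2 := by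
  refine inv_eq_right_inv ?_
  rw [diagonal_transpose, diagonal_mul_diagonal, diagonal_mul_diagonal, ← diagonal_one]
  congr 1 with i
  have := hs i
  field_simp

/-- `B` and `D` stand for the weighted disturbance matrices `B_d S_d` and `D_d S_d`, and `N` for the
noise weight `S_n`, which may couple the measurement channels. -/
theorem h2_observer_equiv_general [DecidableEq n] [DecidableEq d] [DecidableEq y]
    (A : Matrix n n ℝ) (Cy : Matrix y n ℝ) (Cz : Matrix z n ℝ)
    (B : Matrix n d ℝ) (D : Matrix y d ℝ) {N : Matrix y y ℝ} (hN : IsUnit N)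
    {X : Matrix n n ℝ} (hX : X.PosDef) (Y : Matrix n y ℝ) (c : ℝ) :
    (NegDef ((A + X⁻¹ * Y * Cy) * X⁻¹ + X⁻¹ * (A + X⁻¹ * Y * Cy)ᵀ
        + (fromCols B 0 + X⁻¹ * Y * fromCols D N) * (fromCols B 0 + X⁻¹ * Y * fromCols D N)ᵀ)
      ∧ (Cz * X⁻¹ * Czᵀ).trace < c) ↔
    (NegDef (fromBlocks ((X * A + Y * Cy) + (X * A + Y * Cy)ᵀ)
        (fromCols (X * B + Y * D) Y) (fromRows (X * B + Y * D)ᵀ Yᵀ)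
        (fromBlocks (-(1 : Matrix d d ℝ)) 0 0 (-(N * Nᵀ)⁻¹)))
      ∧ ∃ Q : Matrix z z ℝ, Q.PosDef ∧
          NegDef (fromBlocks (-Q) Cz Czᵀ (-X)) ∧ Q.trace < c) := by
  have hX_det : IsUnit X.det := (isUnit_iff_isUnit_det X).1 hX.isUnit
  have drift_eq : X * (A + X⁻¹ * Y * Cy) = X * A + Y * Cy := by
    rw [Matrix.mul_add, Matrix.mul_assoc, mul_nonsing_inv_cancel_left _ _ hX_det]
  have input_eq : X * (fromCols B 0 + X⁻¹ * Y * fromCols D N) =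
      fromCols (X * B + Y * D) (Y * N) := by
    rw [Matrix.mul_add, Matrix.mul_assoc, mul_nonsing_inv_cancel_left _ _ hX_det, mul_fromCols,
      mul_fromCols, Matrix.mul_zero]
    ext i (j | j) <;> simp
  rw [negDef_lyapunov_inv_iff hX.isUnit (isHermitian_iff_isSymm.1 hX.isHermitian), drift_eq,
    input_eq, negDef_fromBlocks_fromCols_iff _ _ _ hN,
    exists_posDef_negDef_fromBlocks_trace_lt_iff hX]

end

/-- Equivalence between the `H₂`-norm matrix-inequality characterization in terms of
`(P, L) = (X⁻¹, X⁻¹ Y)` and the LMI of Theorem 1. -/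
theorem h2_observer_equiv {n nd ny nz : ℕ}
    (A : Matrix (Fin n) (Fin n) ℝ) (Cy : Matrix (Fin ny) (Fin n) ℝ)
    (Cz : Matrix (Fin nz) (Fin n) ℝ) (Bd : Matrix (Fin n) (Fin nd) ℝ)
    (Dd : Matrix (Fin ny) (Fin nd) ℝ)
    (sd : Fin nd → ℝ) (sn : Fin ny → ℝ) (hsn : ∀ i, 0 < sn i)
    (Sd : Matrix (Fin nd) (Fin nd) ℝ) (Sn : Matrix (Fin ny) (Fin ny) ℝ)
    (hSd : Sd = diagonal sd) (hSn : Sn = diagonal sn)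
    (Bw : Matrix (Fin n) (Fin nd ⊕ Fin ny) ℝ) (Dw : Matrix (Fin ny) (Fin nd ⊕ Fin ny) ℝ)
    (hBw : Bw = fromCols (Bd * Sd) 0) (hDw : Dw = fromCols (Dd * Sd) Sn)
    (β : Fin ny → ℝ) (hβ : ∀ i, β i = ((sn i)⁻¹) ^ 2)
    (X : Matrix (Fin n) (Fin n) ℝ) (Y : Matrix (Fin n) (Fin ny) ℝ)
    (hX : X.PosDef) (γ : ℝ) (hγ : 0 < γ)
    (P : Matrix (Fin n) (Fin n) ℝ) (L : Matrix (Fin n) (Fin ny) ℝ)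
    (hP : P = X⁻¹) (hL : L = X⁻¹ * Y)
    (M₁₁ : Matrix (Fin n) (Fin n) ℝ) (M₁₂ : Matrix (Fin n) (Fin nd) ℝ)
    (hM₁₁ : M₁₁ = (X * A + Y * Cy) + (X * A + Y * Cy)ᵀ)
    (hM₁₂ : M₁₂ = X * Bd * Sd + Y * Dd * Sd) :
    (NegDef ((A + L * Cy) * P + P * (A + L * Cy)ᵀ
        + (Bw + L * Dw) * (Bw + L * Dw)ᵀ)
      ∧ (Cz * P * Czᵀ).trace < γ ^ 2) ↔
    (NegDef (fromBlocks M₁₁ (fromCols M₁₂ Y) (fromRows M₁₂ᵀ Yᵀ)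
        (fromBlocks (-(1 : Matrix (Fin nd) (Fin nd) ℝ)) 0 0 (-(diagonal β))))
      ∧ ∃ Q : Matrix (Fin nz) (Fin nz) ℝ, Q.PosDef ∧
          NegDef (fromBlocks (-Q) Cz Czᵀ (-X)) ∧ Q.trace < γ ^ 2) := by
  obtain rfl : β = fun i => (sn i)⁻¹ ^ 2 := funext hβ
  subst hSn hBw hDw hP hL hM₁₁ hM₁₂
  have hSn : IsUnit (diagonal sn) :=
    isUnit_diagonal.2 (Pi.isUnit_iff.2 fun i => (hsn i).ne'.isUnit)
  simpa only [inv_diagonal_mul_transpose fun i => (hsn i).ne', ← Matrix.mul_assoc] using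
    h2_observer_equiv_general A Cy Cz (Bd * Sd) (Dd * Sd) hSn hX Y (γ ^ 2)
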